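/- Let A = ℝ[x,y,z]/(x² + y² + z² − 1) be the real coordinate ring of the 2-sphere, and let a₁, a₂, a₃ ∈ A be the images of x, y, z. The column (a₁,a₂,a₃) is unimodular (Aa₁ + Aa₂ + Aa₃ = A), the map α : A → A³, a ↦ (a₁a, a₂a, a₃a), is a split monomorphism, and its cokernel P satisfies P ⊕ A ≅ A³ but P is not a free A-module; thus P is a stably free non-free A-module of rank two. -/

import Mathlib

/-!
The column `a = (a₁, a₂, a₃)` satisfies `∑ aᵢ² = 1`, so `x ↦ ∑ aᵢ xᵢ` is a retraction of `α`; this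
gives unimodularity, the splitting and `P ⊕ A ≅ A³`.

If `P` were free, it would have a basis vector (`P` being nonzero), represented by some `w ∈ A³`, and
the dual coordinate would be a functional `F : A³ → A` with `F a = 0` and `F w = 1`. Evaluating
polynomial representatives at a point `p` of the sphere shows that `w(p)` is never a multiple of
`p`, against the hairy ball theorem (`exists_eq_smul_of_mem_sphere`).

The hairy ball theorem is proved with winding numbers. In spherical coordinates `(φ, θ)`, the
components of `w` along the frame `(∂/∂φ, (sin φ)⁻¹ ∂/∂θ)`, whose expression in `(φ, θ)` extends
continuously to `sin φ = 0`, form a complex number `tangentCoord w (φ, θ)`, continuous on `ℝ²`. If it never vanishes, it has a continuous logarithm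
`L`, because `exp` is a covering map and the plane is simply connected. The increment
`L (φ, θ + 2π) - L (φ, θ)` is a constant, but at the two poles the frame rotates in opposite
senses, so that the increment is `-2πi` at `φ = 0` and `2πi` at `φ = π`.
-/

/-- The real coordinate ring `ℝ[x₁, …, xₙ]/(x₁² + ⋯ + xₙ² - 1)` of the
`(n-1)`-sphere. -/
abbrev sphereRing (n : ℕ) : Type :=
  MvPolynomial (Fin n) ℝ ⧸
    Ideal.span {(∑ i : Fin n, MvPolynomial.X i ^ 2 : MvPolynomial (Fin n) ℝ) - 1}

/-- The images `a₁, …, aₙ` of the variables `x₁, …, xₙ` in the coordinate ring of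
the sphere. -/
noncomputable def sphereGen (n : ℕ) (i : Fin n) : sphereRing n :=
  Ideal.Quotient.mk _ (MvPolynomial.X i)

/-- The linear map `α : A → Aⁿ`, `a ↦ (a₁ a, …, aₙ a)`, attached to a column
`v = (a₁, …, aₙ)`. -/
noncomputable def colMap {R : Type*} [CommRing R] {n : ℕ} (v : Fin n → R) :
    R →ₗ[R] (Fin n → R) :=
  LinearMap.pi fun i => LinearMap.mulLeft R (v i)

/-- Two continuous logarithms of the same function on a connected space differ by a constant. -/
lemma sub_eq_sub_of_exp_eq {X : Type*} [TopologicalSpace X] [PreconnectedSpace X] {f g : X → ℂ}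
    (hf : Continuous f) (hg : Continuous g) (h : ∀ x, Complex.exp (f x) = Complex.exp (g x))
    (x y : X) : f x - g x = f y - g y := by
  refine Complex.isCoveringMap_exp.const_of_comp (g := fun x => f x - g x) (hf.sub hg) ?_ x y
  intro a b
  simp [Complex.exp_sub, h]

/-- The point of the unit sphere with polar angle `q.1` and azimuth `q.2`. -/
noncomputable def spherePoint (q : ℝ × ℝ) : Fin 3 → ℝ :=
  ![Real.sin q.1 * Real.cos q.2, Real.sin q.1 * Real.sin q.2, Real.cos q.1]

/-- The components of the vector `w p`, where `p = spherePoint q`, along the orthonormal frame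
`(cos φ cos θ, cos φ sin θ, -sin φ)`, `(-sin θ, cos θ, 0)` of the plane tangent to the sphere
at `p`, as the real and imaginary parts of a complex number. -/
noncomputable def tangentCoord (w : (Fin 3 → ℝ) → Fin 3 → ℝ) (q : ℝ × ℝ) : ℂ :=
  ⟨w (spherePoint q) 0 * (Real.cos q.1 * Real.cos q.2)
      + w (spherePoint q) 1 * (Real.cos q.1 * Real.sin q.2) - w (spherePoint q) 2 * Real.sin q.1,
    w (spherePoint q) 1 * Real.cos q.2 - w (spherePoint q) 0 * Real.sin q.2⟩

lemma continuous_spherePoint : Continuous spherePoint := by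
  refine continuous_pi fun i => ?_
  fin_cases i <;> simp [spherePoint] <;> fun_prop

lemma continuous_tangentCoord {w : (Fin 3 → ℝ) → Fin 3 → ℝ} (hw : Continuous w) :
    Continuous (tangentCoord w) := by
  have hs := continuous_spherePoint
  have h : ∀ i, Continuous fun q => w (spherePoint q) i := fun i =>
    (continuous_apply i).comp (hw.comp continuous_spherePoint)
  refine Complex.equivRealProdCLM.symm.continuous.comp
    (f := fun q => ((tangentCoord w q).re, (tangentCoord w q).im)) ?_
  simp only [tangentCoord]
  fun_prop

/-- A vector whose tangential components at `p` vanish is a multiple of `p`. -/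
lemma eq_smul_of_tangentCoord_eq_zero {w : (Fin 3 → ℝ) → Fin 3 → ℝ} {q : ℝ × ℝ}
    (h : tangentCoord w q = 0) : ∃ c : ℝ, w (spherePoint q) = c • spherePoint q := by
  have hre := congrArg Complex.re h
  have him := congrArg Complex.im h
  simp only [tangentCoord, Complex.zero_re, Complex.zero_im] at hre him
  have h1 := Real.sin_sq_add_cos_sq q.1
  have h2 := Real.sin_sq_add_cos_sq q.2
  -- The multiple is the radial component `⟪w p, p⟫`.
  refine ⟨w (spherePoint q) 0 * (Real.sin q.1 * Real.cos q.2)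
    + w (spherePoint q) 1 * (Real.sin q.1 * Real.sin q.2) + w (spherePoint q) 2 * Real.cos q.1, ?_⟩
  generalize w (spherePoint q) = u at *
  ext i
  fin_cases i <;> simp [spherePoint] <;> grind

/-- At the north pole, `w p` is a fixed vector and the frame turns once, positively for the
orientation by the outward normal, as `θ` increases by `2π`. -/
lemma tangentCoord_zero (w : (Fin 3 → ℝ) → Fin 3 → ℝ) (θ : ℝ) :
    tangentCoord w (0, θ) = tangentCoord w (0, 0) * Complex.exp (-(θ * Complex.I)) := by
  rw [← neg_mul, Complex.exp_mul_I, ← Complex.ofReal_neg, ← Complex.ofReal_cos, ← Complex.ofReal_sin]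
  apply Complex.ext
  · simp [tangentCoord, spherePoint, -Complex.ofReal_neg, -Complex.ofReal_cos, -Complex.ofReal_sin]
  · simp [tangentCoord, spherePoint, -Complex.ofReal_neg, -Complex.ofReal_cos, -Complex.ofReal_sin]
    ring

/-- At the south pole, `w p` is a fixed vector and the frame turns once, negatively for the
orientation by the outward normal, as `θ` increases by `2π`. -/
lemma tangentCoord_pi (w : (Fin 3 → ℝ) → Fin 3 → ℝ) (θ : ℝ) :
    tangentCoord w (Real.pi, θ) = tangentCoord w (Real.pi, 0) * Complex.exp (θ * Complex.I) := by
  rw [Complex.exp_mul_I, ← Complex.ofReal_cos, ← Complex.ofReal_sin]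
  apply Complex.ext <;> simp [tangentCoord, spherePoint, -Complex.ofReal_cos,
    -Complex.ofReal_sin] <;> ring

/-- **Hairy ball theorem**: a continuous vector field in `ℝ³` along the 2-sphere is radial at some
point. -/
theorem exists_eq_smul_of_mem_sphere {w : (Fin 3 → ℝ) → Fin 3 → ℝ} (hw : Continuous w) :
    ∃ p : Fin 3 → ℝ, ∑ i, p i ^ 2 = 1 ∧ ∃ c : ℝ, w p = c • p := by
  by_contra! H
  have hne : ∀ q, tangentCoord w q ≠ 0 := by
    intro q hq
    obtain ⟨c, hc⟩ := eq_smul_of_tangentCoord_eq_zero hq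
    refine H (spherePoint q) ?_ c hc
    have h1 := Real.sin_sq_add_cos_sq q.1
    have h2 := Real.sin_sq_add_cos_sq q.2
    simp only [Fin.sum_univ_three, spherePoint, Matrix.cons_val]
    grind
  obtain ⟨L, ⟨-, hL⟩, -⟩ := Complex.isCoveringMapOn_exp.existsUnique_continuousMap_lifts
    ⟨tangentCoord w, continuous_tangentCoord hw⟩ (Complex.exp_log (hne (0, 0))) hne
  replace hL : ∀ q, Complex.exp (L q) = tangentCoord w q := congrFun hL
  have hper := sub_eq_sub_of_exp_eq (f := fun q : ℝ × ℝ => L (q.1, q.2 + 2 * Real.pi)) (g := L)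
    (by fun_prop) (by fun_prop) (by intro q; simp [hL, tangentCoord, spherePoint])
    (0, 0) (Real.pi, 0)
  have hN := sub_eq_sub_of_exp_eq (f := fun θ : ℝ => L (0, θ))
    (g := fun θ => L (0, 0) + -(θ * Complex.I)) (by fun_prop) (by fun_prop)
    (by intro θ; rw [Complex.exp_add, hL, hL, tangentCoord_zero]) (2 * Real.pi) 0
  have hS := sub_eq_sub_of_exp_eq (f := fun θ : ℝ => L (Real.pi, θ))
    (g := fun θ => L (Real.pi, 0) + θ * Complex.I) (by fun_prop) (by fun_prop)
    (by intro θ; rw [Complex.exp_add, hL, hL, tangentCoord_pi]) (2 * Real.pi) 0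
  simp at hper hN hS
  have h4 : 4 * (Real.pi : ℂ) * Complex.I = 0 := by linear_combination hN - hS - hper
  simp [Real.pi_ne_zero] at h4

lemma sum_sphereGen_mul_self (n : ℕ) : ∑ i, sphereGen n i * sphereGen n i = 1 := by
  have h : (∑ i : Fin n, MvPolynomial.X i ^ 2 : MvPolynomial (Fin n) ℝ) - 1 ∈
      Ideal.span {(∑ i : Fin n, MvPolynomial.X i ^ 2 : MvPolynomial (Fin n) ℝ) - 1} :=
    Ideal.mem_span_singleton_self _
  rw [← Ideal.Quotient.eq_zero_iff_mem, map_sub, map_sum, map_one, sub_eq_zero] at h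
  simpa [sphereGen, pow_two] using h

/-- Polynomials that agree in the coordinate ring take the same values on the sphere. -/
lemma eval_eq_of_mk_eq {n : ℕ} {p q : MvPolynomial (Fin n) ℝ}
    (h : (Ideal.Quotient.mk _ p : sphereRing n) = Ideal.Quotient.mk _ q) {x : Fin n → ℝ}
    (hx : ∑ i, x i ^ 2 = 1) : MvPolynomial.eval x p = MvPolynomial.eval x q := by
  rw [Ideal.Quotient.eq, Ideal.mem_span_singleton] at h
  obtain ⟨r, hr⟩ := h
  have := congrArg (MvPolynomial.eval x) hr
  simpa [hx, sub_eq_zero] using this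

/-- A functional on `A³` that kills the column `(a₁, a₂, a₃)` takes the value `1` nowhere: evaluated
at a point `p` of the sphere where `w(p)` is a multiple of `p`, it kills `w(p)`. -/
lemma not_exists_functional (w : Fin 3 → sphereRing 3)
    (F : (Fin 3 → sphereRing 3) →ₗ[sphereRing 3] sphereRing 3)
    (ha : F (sphereGen 3) = 0) (hw : F w = 1) : False := by
  have hF : ∀ v, F v = ∑ i, v i * F (Pi.single i 1) := by
    intro v
    conv_lhs => rw [pi_eq_sum_univ' v]
    simp [map_sum]
  choose r hr using fun i => Ideal.Quotient.mk_surjective (F (Pi.single i 1))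
  choose s hs using fun i => Ideal.Quotient.mk_surjective (w i)
  obtain ⟨x, hx, c, hc⟩ := exists_eq_smul_of_mem_sphere
    (w := fun x i => MvPolynomial.eval x (s i))
    (continuous_pi fun i => MvPolynomial.continuous_eval (s i))
  have h0 : ∑ i, x i * MvPolynomial.eval x (r i) = 0 := by
    have := eval_eq_of_mk_eq (p := ∑ i, MvPolynomial.X i * r i) (q := 0)
      (by rw [map_zero, ← ha, hF, map_sum]; simp [hr, sphereGen]) hx
    simpa using this
  have h1 : ∑ i, MvPolynomial.eval x (s i) * MvPolynomial.eval x (r i) = 1 := by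
    have := eval_eq_of_mk_eq (p := ∑ i, s i * r i) (q := 1)
      (by rw [map_one, ← hw, hF, map_sum]; simp [hr, hs]) hx
    simpa using this
  have hcv : ∀ i, MvPolynomial.eval x (s i) = c * x i := fun i => congrFun hc i
  simp only [hcv, mul_assoc, ← Finset.mul_sum, h0] at h1
  simp at h1

/-- The quotient of `A³` by the column is nonzero: at the point `(1, 0, 0)` of the sphere, the
vector `(0, 1, 0)` is not a multiple of the column. -/
lemma single_notMem_range_colMap :
    (Pi.single 1 1 : Fin 3 → sphereRing 3) ∉ LinearMap.range (colMap (sphereGen 3)) := by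
  rintro ⟨a, ha⟩
  obtain ⟨p, rfl⟩ := Ideal.Quotient.mk_surjective a
  have h := congrFun ha 1
  have := eval_eq_of_mk_eq (p := MvPolynomial.X 1 * p) (q := 1) (x := ![1, 0, 0])
    (by simpa [colMap, sphereGen] using h) (by simp [Fin.sum_univ_three])
  simp at this

/-- `x ↦ ∑ vᵢ xᵢ` retracts `colMap v` when `∑ vᵢ² = 1`. -/
lemma sum_smul_proj_comp_colMap {R : Type*} [CommRing R] {n : ℕ} {v : Fin n → R}
    (hv : ∑ i, v i * v i = 1) :
    (∑ i, v i • LinearMap.proj i : (Fin n → R) →ₗ[R] R).comp (colMap v) = LinearMap.id := by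
  ext
  simpa [colMap] using hv

/-- A submodule with a retraction is a direct summand, with the quotient as complement. -/
lemma nonempty_quotient_prod_equiv {R M N : Type*} [CommRing R] [AddCommGroup M] [Module R M]
    [AddCommGroup N] [Module R N] (f : M →ₗ[R] N) (g : N →ₗ[R] M)
    (h : g.comp f = LinearMap.id) : Nonempty (((N ⧸ LinearMap.range f) × M) ≃ₗ[R] N) :=
  have hex : Function.Exact f (LinearMap.range f).mkQ := LinearMap.exact_map_mkQ_range f
  ⟨(LinearEquiv.prodComm R _ _).trans
    (hex.splitInjectiveEquiv (Submodule.mkQ_surjective _) ⟨g, h⟩).1.symm⟩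

/-- A nonzero free quotient `M ⧸ N` provides a lift `w` of a basis vector and the corresponding
coordinate function on `M`, which vanishes on `N`. -/
lemma exists_functional_of_free_quotient {R M : Type*} [CommRing R] [AddCommGroup M] [Module R M]
    {N : Submodule R M} [Module.Free R (M ⧸ N)] {x : M} (hx : x ∉ N) :
    ∃ (w : M) (F : M →ₗ[R] R), (∀ y ∈ N, F y = 0) ∧ F w = 1 := by
  let b := Module.Free.chooseBasis R (M ⧸ N)
  rcases isEmpty_or_nonempty (Module.Free.ChooseBasisIndex R (M ⧸ N)) with hι | ⟨⟨k⟩⟩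
  · refine absurd ?_ hx
    rw [← Submodule.Quotient.mk_eq_zero, ← b.repr.map_eq_zero_iff]
    exact Subsingleton.elim _ _
  · obtain ⟨w, hw⟩ := Submodule.mkQ_surjective N (b k)
    refine ⟨w, (b.coord k).comp N.mkQ, fun y hy => ?_, ?_⟩
    · rw [LinearMap.comp_apply, Submodule.mkQ_apply, (Submodule.Quotient.mk_eq_zero N).2 hy,
        map_zero]
    · rw [LinearMap.comp_apply, hw]
      simp

/-- In `A = ℝ[x,y,z]/(x² + y² + z² - 1)`, the column
`(a₁, a₂, a₃)` of images of the variables is unimodular, the map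
`α : A → A³`, `a ↦ (a₁ a, a₂ a, a₃ a)`, is a split monomorphism, and its cokernel
`P` satisfies `P ⊕ A ≅ A³` but is not free: `P` is a stably free non-free
`A`-module of rank two. -/
theorem sphere2_stablyFree_nonfree :
    Ideal.span (Set.range (sphereGen 3)) = ⊤ ∧
    Function.Injective (colMap (sphereGen 3)) ∧
    (∃ g : (Fin 3 → sphereRing 3) →ₗ[sphereRing 3] sphereRing 3,
      g.comp (colMap (sphereGen 3)) = LinearMap.id) ∧
    Nonempty ((((Fin 3 → sphereRing 3) ⧸ LinearMap.range (colMap (sphereGen 3)))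
        × sphereRing 3) ≃ₗ[sphereRing 3] (Fin 3 → sphereRing 3)) ∧
    ¬ Module.Free (sphereRing 3)
        ((Fin 3 → sphereRing 3) ⧸ LinearMap.range (colMap (sphereGen 3))) := by
  have hg := sum_smul_proj_comp_colMap (sum_sphereGen_mul_self 3)
  refine ⟨?_, LinearMap.injective_of_comp_eq_id _ _ hg, ⟨_, hg⟩,
    nonempty_quotient_prod_equiv _ _ hg, fun hfree => ?_⟩
  · rw [Ideal.eq_top_iff_one, ← sum_sphereGen_mul_self 3]
    exact Ideal.sum_mem _ fun i _ => Ideal.mul_mem_left _ _ (Ideal.subset_span ⟨i, rfl⟩)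
  · obtain ⟨w, F, hF, hw⟩ := exists_functional_of_free_quotient single_notMem_range_colMap
    exact not_exists_functional w F (hF _ ⟨1, by ext i; simp [colMap]⟩) hw
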